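/- There are no perfect numbers x and y with x - y = 435; that is, 435 is not the distance between two perfect numbers. -/

import Mathlib

theorem aux_four (m : ℕ) (hm : m % 4 = 3) : 4 ∣ ∑ d ∈ m.divisors, d := by
  rw [← ZMod.natCast_eq_zero_iff]
  push_cast
  have key : ∀ d ∈ m.divisors, d * (m / d) = m := fun d hd =>
    Nat.mul_div_cancel' (Nat.dvd_of_mem_divisors hd)
  have hm4 : ((m : ℕ) : ZMod 4) = 3 := by
    rw [← ZMod.natCast_mod, hm]; rfl
  have fin1 : ∀ a b : ZMod 4, a * b = 3 → a + b = 0 := by decide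
  have fin2 : ∀ a : ZMod 4, a * a ≠ 3 := by decide
  refine Finset.sum_involution (fun d _ => m / d) ?_ ?_ ?_ ?_
  · intro d hd
    apply fin1
    rw [← Nat.cast_mul, key d hd, hm4]
  · intro d hd _ h
    have h1 := key d hd
    rw [h] at h1
    apply fin2 (d : ZMod 4)
    rw [← Nat.cast_mul, h1, hm4]
  · intro d hd
    exact Nat.mem_divisors.2 ⟨Nat.div_dvd_of_dvd (Nat.dvd_of_mem_divisors hd), by omega⟩
  · intro d hd
    exact Nat.div_div_self (Nat.dvd_of_mem_divisors hd) (by omega)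

theorem aux_sq (m : ℕ) (hm : m % 2 = 1) (hs : ¬ 2 ∣ ∑ d ∈ m.divisors, d) : ∃ t, m = t * t := by
  by_contra hno
  apply hs
  rw [← ZMod.natCast_eq_zero_iff]
  push_cast
  have key : ∀ d ∈ m.divisors, d * (m / d) = m := fun d hd =>
    Nat.mul_div_cancel' (Nat.dvd_of_mem_divisors hd)
  have hm4 : ((m : ℕ) : ZMod 2) = 1 := by
    rw [← ZMod.natCast_mod, hm]; rfl
  have fin1 : ∀ a b : ZMod 2, a * b = 1 → a + b = 0 := by decide
  refine Finset.sum_involution (fun d _ => m / d) ?_ ?_ ?_ ?_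
  · intro d hd
    apply fin1
    rw [← Nat.cast_mul, key d hd, hm4]
  · intro d hd _ h
    have h1 := key d hd
    rw [h] at h1
    exact hno ⟨d, h1.symm⟩
  · intro d hd
    exact Nat.mem_divisors.2 ⟨Nat.div_dvd_of_dvd (Nat.dvd_of_mem_divisors hd), by omega⟩
  · intro d hd
    exact Nat.div_div_self (Nat.dvd_of_mem_divisors hd) (by omega)

theorem aux_sigma {n : ℕ} (h : n.Perfect) : ∑ d ∈ n.divisors, d = 2 * n :=
  (Nat.perfect_iff_sum_divisors_eq_two_mul h.2).1 h

theorem aux_even {n : ℕ} (h : n.Perfect) (he : n % 2 = 0) :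
    ∃ k, 1 ≤ k ∧ n + 2 ^ k = 2 ^ k * 2 ^ (k + 1) := by
  obtain ⟨k, m, hm, rfl⟩ := Nat.exists_eq_two_pow_mul_odd h.2.ne'
  have hk : 1 ≤ k := by
    rcases Nat.eq_zero_or_pos k with rfl | h0
    · obtain ⟨j, rfl⟩ := hm
      omega
    · exact h0
  refine ⟨k, hk, ?_⟩
  have hs := aux_sigma h
  have hcop : Nat.Coprime (2 ^ k) m := Nat.Coprime.pow_left _ (Nat.coprime_two_left.2 hm)
  rw [hcop.sum_divisors_mul] at hs
  have h2 : (∑ d ∈ (2 ^ k).divisors, d) + 1 = 2 ^ (k + 1) := by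
    rw [Nat.sum_divisors_prime_pow Nat.prime_two]
    have := Nat.geomSum_eq (le_refl 2) (k + 1)
    have h3 : 1 ≤ 2 ^ (k + 1) := Nat.one_le_two_pow
    simp at this
    omega
  set M := ∑ d ∈ (2 ^ k).divisors, d with hM
  have h4 : 4 ≤ 2 ^ (k + 1) := by
    calc 4 = 2 ^ 2 := rfl
      _ ≤ _ := Nat.pow_le_pow_right (by norm_num) (by omega)
  have hmpos : 0 < m := hm.pos
  have hs' : M * ∑ d ∈ m.divisors, d = (M + 1) * m := by
    rw [hs, h2, pow_succ]; ring
  have hdvd : M ∣ m := by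
    have : M ∣ (M + 1) * m := ⟨_, hs'.symm⟩
    exact Nat.Coprime.dvd_of_dvd_mul_left (by simp) this
  obtain ⟨c, hc⟩ := hdvd
  have hsc : ∑ d ∈ m.divisors, d = (M + 1) * c := by
    have hMpos : 0 < M := by omega
    apply Nat.eq_of_mul_eq_mul_left hMpos
    rw [hs', hc]; ring
  rw [Nat.sum_divisors_eq_sum_properDivisors_add_self] at hsc
  have hpc : ∑ d ∈ m.properDivisors, d = c := by
    have : (M + 1) * c = c + m := by rw [hc]; ring
    omega
  have hcpos : 0 < c := by
    rcases Nat.eq_zero_or_pos c with rfl | h0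
    · simp at hc; omega
    · exact h0
  rcases Nat.sum_properDivisors_dvd (n := m) (by rw [hpc]; exact ⟨M, by rw [hc]; ring⟩) with h1 | h1
  · rw [hpc] at h1
    subst h1
    rw [← h2, hc]; ring
  · rw [hpc] at h1
    rw [h1] at hc
    nlinarith

theorem pow59 (i : ℕ) : (i % 2 = 0 → 59 ^ i % 8 = 1) ∧ (i % 2 = 1 → 59 ^ i % 8 = 3) := by
  induction i with
  | zero => simp
  | succ n ih => rw [pow_succ]; omega

theorem aux_main (A B : ℕ) (hA : A % 8 = 1) (hB : B % 8 = 5) (hAB : 2 * A + 59 = B)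
    (h : (A * B).Perfect) : ∃ t, A = t * t := by
  have hp : Nat.Prime 59 := by norm_num
  have hs := aux_sigma h
  obtain ⟨i, a, ha, rfl⟩ := Nat.exists_eq_pow_mul_and_not_dvd (n := A) (by omega) 59 (by norm_num)
  obtain ⟨j, b, hb, rfl⟩ := Nat.exists_eq_pow_mul_and_not_dvd (n := B) (by omega) 59 (by norm_num)
  have ca : Nat.Coprime 59 a := (Nat.Prime.coprime_iff_not_dvd hp).2 ha
  have cb : Nat.Coprime 59 b := (Nat.Prime.coprime_iff_not_dvd hp).2 hb
  have cab : Nat.Coprime a b := by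
    have h1 : Nat.gcd a b ∣ 59 := by
      have hx : Nat.gcd a b ∣ 2 * (59 ^ i * a) :=
        Dvd.dvd.mul_left (Dvd.dvd.mul_left (Nat.gcd_dvd_left a b) _) _
      have hy : Nat.gcd a b ∣ 59 ^ j * b := Dvd.dvd.mul_left (Nat.gcd_dvd_right a b) _
      rw [← hAB] at hy
      exact (Nat.dvd_add_right hx).1 hy
    exact Nat.dvd_one.1 (by
      have : Nat.gcd a b ∣ Nat.gcd 59 a := Nat.dvd_gcd h1 (Nat.gcd_dvd_left a b)
      rwa [ca] at this)
  have e : 59 ^ i * a * (59 ^ j * b) = 59 ^ (i + j) * (a * b) := by rw [pow_add]; ring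
  have hodd : (59 ^ i * a * (59 ^ j * b)) % 2 = 1 := by
    rw [Nat.mul_mod]
    have h1 : (59 ^ i * a) % 2 = 1 := by omega
    have h2 : (59 ^ j * b) % 2 = 1 := by omega
    rw [h1, h2]
  rw [e] at hs hodd
  have c2 : Nat.Coprime (59 ^ (i + j)) (a * b) :=
    Nat.Coprime.pow_left _ (Nat.Coprime.mul_right ca cb)
  rw [c2.sum_divisors_mul, cab.sum_divisors_mul] at hs
  have hn4 : ¬ 4 ∣ 2 * (59 ^ (i + j) * (a * b)) := by omega
  have hij : (i + j) % 2 = 0 := by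
    by_contra hne
    apply hn4
    rw [← hs]
    apply Dvd.dvd.mul_right
    apply aux_four
    have := (pow59 (i + j)).2 (by omega)
    omega
  have h1 : ¬ 2 ∣ (∑ d ∈ a.divisors, d) ∨ ¬ 2 ∣ (∑ d ∈ b.divisors, d) := by
    by_contra hcon
    push Not at hcon
    apply hn4
    rw [← hs]
    exact Dvd.dvd.mul_left (mul_dvd_mul hcon.1 hcon.2) _
  have hA' := hA
  have hB' := hB
  rw [Nat.mul_mod] at hA' hB'
  have pi := pow59 i
  have pj := pow59 j
  have sq8 : ∀ t : ℕ, t * t % 8 = 0 ∨ t * t % 8 = 1 ∨ t * t % 8 = 4 := by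
    intro t
    have : t % 8 < 8 := Nat.mod_lt _ (by norm_num)
    rw [Nat.mul_mod]
    interval_cases t % 8 <;> simp
  have a2 : a % 2 = 1 := by
    rcases Nat.mod_two_eq_zero_or_one i with hi | hi
    · rw [pi.1 hi] at hA'; omega
    · rw [pi.2 hi] at hA'; omega
  have b2 : b % 2 = 1 := by
    rcases Nat.mod_two_eq_zero_or_one j with hi | hi
    · rw [pj.1 hi] at hB'; omega
    · rw [pj.2 hi] at hB'; omega
  rcases Nat.mod_two_eq_zero_or_one i with hi | hi
  · have hj : j % 2 = 0 := by omega
    rw [pi.1 hi] at hA'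
    rw [pj.1 hj] at hB'
    rcases h1 with h1 | h1
    · obtain ⟨t, rfl⟩ := aux_sq a a2 h1
      refine ⟨59 ^ (i / 2) * t, ?_⟩
      have : 59 ^ i = 59 ^ (i / 2) * 59 ^ (i / 2) := by
        rw [← pow_add]; congr 1; omega
      rw [this]; ring
    · obtain ⟨t, rfl⟩ := aux_sq b b2 h1
      have := sq8 t
      omega
  · have hj : j % 2 = 1 := by omega
    rw [pi.2 hi] at hA'
    rw [pj.2 hj] at hB'
    rcases h1 with h1 | h1
    · obtain ⟨t, rfl⟩ := aux_sq a a2 h1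
      have := sq8 t
      omega
    · obtain ⟨t, rfl⟩ := aux_sq b b2 h1
      have := sq8 t
      omega

theorem aux_pow (k t : ℕ) (h : 2 ^ k = t * t + 15) : k = 4 ∨ k = 6 := by
  rcases Nat.even_or_odd' k with ⟨j, rfl | rfl⟩
  · have e : 2 ^ (2 * j) = 2 ^ j * 2 ^ j := by rw [two_mul, pow_add]
    rw [e] at h
    have gen : ∀ u : ℕ, u * u = t * t + 15 → u ≤ 8 := by
      intro u hu
      have hlt : t < u := by nlinarith
      nlinarith
    have hj : 2 ^ j ≤ 8 := gen _ h
    have : j ≤ 3 := (Nat.pow_le_pow_iff_right (by norm_num : 1 < 2)).1 (by simpa using hj)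
    interval_cases j
    · omega
    · omega
    · omega
    · omega
  · exfalso
    have h3 : 2 ^ (2 * j + 1) % 3 = 2 := by
      rw [pow_succ, pow_mul, Nat.mul_mod, Nat.pow_mod]; simp
    have : t % 3 < 3 := Nat.mod_lt _ (by norm_num)
    have ht : t * t % 3 ≠ 2 := by
      rw [Nat.mul_mod]
      interval_cases t % 3 <;> simp
    omega

theorem stmt_18 :
    ¬ ∃ x y : ℕ, Nat.Perfect x ∧ Nat.Perfect y ∧ x - y = 435 := by
  rintro ⟨x, y, hx, hy, hxy⟩
  obtain rfl : x = y + 435 := by omega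
  rcases Nat.mod_two_eq_zero_or_one y with h2 | h2
  · obtain ⟨k, hk, e⟩ := aux_even hy h2
    rcases Nat.lt_or_ge k 2 with hk2 | hk2
    · obtain rfl : k = 1 := by omega
      obtain rfl : y = 6 := by omega
      obtain ⟨hx, -⟩ := hx
      revert hx
      decide +kernel
    · obtain ⟨j, rfl⟩ := Nat.exists_eq_add_of_le hk2
      rw [pow_add, mul_assoc] at e
      have h4 := aux_four (y + 435) (by omega)
      rw [aux_sigma hx] at h4
      omega
  · obtain ⟨k, hk, e⟩ := aux_even hx (by omega)
    rcases Nat.lt_or_ge k 4 with hk4 | hk4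
    · interval_cases k <;> omega
    · obtain ⟨j, rfl⟩ := Nat.exists_eq_add_of_le hk4
      have hp : 1 ≤ 2 ^ j := Nat.one_le_two_pow
      have e1 : 2 ^ (4 + j) = 16 * 2 ^ j := by rw [pow_add]; norm_num
      obtain ⟨A, hA⟩ : ∃ A, 2 ^ (4 + j) = A + 15 := ⟨2 ^ (4 + j) - 15, by omega⟩
      have hyA : y = A * (2 * A + 59) := by
        rw [pow_succ, hA] at e
        nlinarith
      obtain ⟨t, ht⟩ := aux_main A (2 * A + 59) (by omega) (by omega) rfl (hyA ▸ hy)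
      rw [ht] at hA
      have hyp := hy.1
      rcases aux_pow _ _ hA with h | h
      · rw [h] at hA
        obtain rfl : A = 1 := by omega
        subst hyA
        revert hyp
        decide +kernel
      · rw [h] at hA
        obtain rfl : A = 49 := by omega
        subst hyA
        revert hyp
        decide +kernel
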